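/- Let λ₁ ∈ ℝ and let φ : S^{N−1} → ℝ be such that the 0-homogeneous extension Φ(x) = φ(x/|x|) is C² on the open cone C_Ω and satisfies ΔΦ(x) = −λ₁|x|^{−2}Φ(x) for all x ∈ C_Ω. Set μ = λ₁ + ((N−2)/2)² and γ_* = (2−N)/2. Then for every σ > 0 and every τ ∈ ℝ, the function u(x) = Φ(x)·|x|^{γ_*}·(log(σ|x|))^τ satisfies −Δu(x) − μ|x|^{−2}u(x) = τ(1−τ)·Φ(x)·|x|^{γ_*−2}·(log(σ|x|))^{τ−2} for all x ∈ C_Ω with σ|x| > 1. -/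

import Mathlib

open MeasureTheory Real Set
open scoped ENNReal NNReal

noncomputable section

/-- Euclidean space `ℝ^N`. -/
abbrev Euc (N : ℕ) := EuclideanSpace ℝ (Fin N)

/-- The Euclidean Laplacian `Δu(x) = ∑ ∂²u/∂xᵢ²(x)`, the trace of the Hessian. -/
def lap (N : ℕ) (u : Euc N → ℝ) (x : Euc N) : ℝ :=
  ∑ i : Fin N,
    iteratedFDeriv ℝ 2 u x ![EuclideanSpace.single i 1, EuclideanSpace.single i 1]

/-- The open cone `C_Ω^ρ = {x : |x| > ρ, x/|x| ∈ Ω}`. -/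
def coneGT (N : ℕ) (ρ : ℝ) (Ω : Set (Euc N)) : Set (Euc N) :=
  {x | ρ < ‖x‖ ∧ ‖x‖⁻¹ • x ∈ Ω}

/-- The full open cone `C_Ω = {x ≠ 0 : x/|x| ∈ Ω}`. -/
def cone (N : ℕ) (Ω : Set (Euc N)) : Set (Euc N) :=
  {x | x ≠ 0 ∧ ‖x‖⁻¹ • x ∈ Ω}

/-- `Ω` is a nonempty, connected, relatively open subset of the unit sphere `S^{N-1}`. -/
def IsConeDomain (N : ℕ) (Ω : Set (Euc N)) : Prop :=
  Ω ⊆ Metric.sphere (0 : Euc N) 1 ∧ IsConnected Ω ∧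
    IsOpen {ω : Metric.sphere (0 : Euc N) 1 | (ω : Euc N) ∈ Ω}

/-- The convolution `(|x|^{-α} * f)(x) = ∫_{C_Ω^ρ} f(y)|x-y|^{-α} dy`, valued in `[0,∞]`. -/
def rieszConv (N : ℕ) (α ρ : ℝ) (Ω : Set (Euc N)) (f : Euc N → ℝ) (x : Euc N) : ℝ≥0∞ :=
  ∫⁻ y in coneGT N ρ Ω, ENNReal.ofReal (f y * ‖x - y‖ ^ (-α))

/-- Dirichlet eigenpair hypothesis for `(Ω, λ₁, φ)`: `φ` is continuous on the closure of `Ω`,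
positive on `Ω`, vanishing on the relative boundary, with maximum `1`, and its 0-homogeneous
extension `Φ(x) = φ(x/|x|)` is `C²` on the open cone and satisfies `ΔΦ = -λ₁|x|⁻²Φ`. -/
structure DirichletEigenpair (N : ℕ) (Ω : Set (Euc N)) (lam1 : ℝ) (φ : Euc N → ℝ) : Prop where
  contOn : ContinuousOn φ (closure Ω)
  pos : ∀ ω ∈ Ω, 0 < φ ω
  bdryZero : ∀ ω ∈ closure Ω \ Ω, φ ω = 0
  le_one : ∀ ω ∈ closure Ω, φ ω ≤ 1
  max_one : ∃ ω ∈ closure Ω, φ ω = 1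
  smoothExt : ContDiffOn ℝ 2 (fun x => φ (‖x‖⁻¹ • x)) (cone N Ω)
  eigen : ∀ x ∈ cone N Ω,
    lap N (fun y => φ (‖y‖⁻¹ • y)) x = -lam1 * ‖x‖ ^ (-(2:ℝ)) * φ (‖x‖⁻¹ • x)

/-- The Hardy constant `C_{H,Ω} = λ₁ + ((N-2)/2)²`. -/
def CHconst (N : ℕ) (lam1 : ℝ) : ℝ := lam1 + (((N : ℝ) - 2) / 2) ^ 2

/-- The smaller root `γ_*` of `γ(γ + N - 2) = λ₁ - μ`. -/
def gammaStar (N : ℕ) (lam1 μ : ℝ) : ℝ :=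
  (-((N : ℝ) - 2) - Real.sqrt (((N : ℝ) - 2) ^ 2 + 4 * (lam1 - μ))) / 2

/-- A positive (classical) solution of `(E) : -Δu - μ|x|⁻²u ≥ (|x|^{-α} * uᵖ) u^q` in `C_Ω^ρ`. -/
def IsPosSolE (N : ℕ) (ρ μ α p q : ℝ) (Ω : Set (Euc N)) (u : Euc N → ℝ) : Prop :=
  ContDiffOn ℝ 2 u (coneGT N ρ Ω) ∧
  ContinuousOn u (closure (coneGT N ρ Ω)) ∧
  (∀ x ∈ coneGT N ρ Ω, 0 < u x) ∧
  (∀ x ∈ coneGT N ρ Ω, rieszConv N α ρ Ω (fun y => u y ^ p) x < ⊤) ∧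
  (∀ x ∈ coneGT N ρ Ω,
    (rieszConv N α ρ Ω (fun y => u y ^ p) x).toReal * u x ^ q ≤
      -lap N u x - μ * ‖x‖ ^ (-(2:ℝ)) * u x)

/-- A positive solution of `(Z) : -Δu - μ|x|⁻²u ≥ (∫_{C_Ω^ρ} uᵖ) u^q` in `C_Ω^ρ`. -/
def IsPosSolZ (N : ℕ) (ρ μ p q : ℝ) (Ω : Set (Euc N)) (u : Euc N → ℝ) : Prop :=
  ContDiffOn ℝ 2 u (coneGT N ρ Ω) ∧
  ContinuousOn u (closure (coneGT N ρ Ω)) ∧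
  (∀ x ∈ coneGT N ρ Ω, 0 < u x) ∧
  (∫⁻ y in coneGT N ρ Ω, ENNReal.ofReal (u y ^ p)) < ⊤ ∧
  (∀ x ∈ coneGT N ρ Ω,
    (∫⁻ y in coneGT N ρ Ω, ENNReal.ofReal (u y ^ p)).toReal * u x ^ q ≤
      -lap N u x - μ * ‖x‖ ^ (-(2:ℝ)) * u x)

/-- A positive solution `(u, v)` of the system `(S)` in `C_Ω^ρ`. -/
def IsPosSolS (N : ℕ) (ρ μ α p q s : ℝ) (Ω : Set (Euc N)) (u v : Euc N → ℝ) : Prop :=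
  ContDiffOn ℝ 2 u (coneGT N ρ Ω) ∧ ContinuousOn u (closure (coneGT N ρ Ω)) ∧
  ContDiffOn ℝ 2 v (coneGT N ρ Ω) ∧ ContinuousOn v (closure (coneGT N ρ Ω)) ∧
  (∀ x ∈ coneGT N ρ Ω, 0 < u x) ∧ (∀ x ∈ coneGT N ρ Ω, 0 < v x) ∧
  (∀ x ∈ coneGT N ρ Ω, rieszConv N α ρ Ω (fun y => v y ^ p) x < ⊤) ∧
  (∀ x ∈ coneGT N ρ Ω,
    (rieszConv N α ρ Ω (fun y => v y ^ p) x).toReal * v x ^ q ≤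
      -lap N u x - μ * ‖x‖ ^ (-(2:ℝ)) * u x) ∧
  (∀ x ∈ coneGT N ρ Ω, u x ^ s ≤ -lap N v x - μ * ‖x‖ ^ (-(2:ℝ)) * v x)

/-!
Since `Φ` is constant along rays, `∇Φ` is orthogonal to the radial direction, so the product rule
gives `Δ(g(|x|) Φ) = g(|x|) ΔΦ + (g'' + (n - 1) g' / r) Φ` with `r = |x|` and `n` the dimension.
For `g(r) = r ^ γ * L ^ τ`, `L = log (σ r)`, the radial Laplacian is
`r ^ (γ - 2) * (γ (γ + n - 2) L ^ τ + τ (2γ + n - 2) L ^ (τ - 1) + τ (τ - 1) L ^ (τ - 2))`.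
The exponent `γ = (2 - n) / 2` is the one that kills the middle term, and it turns the first
coefficient into `-((n - 2) / 2)²`, which cancels the Hardy part of the potential.
-/

open Filter Topology Laplacian InnerProductSpace Gradient

section Calculus

variable {𝕜 E F : Type*} [NontriviallyNormedField 𝕜] [NormedAddCommGroup E] [NormedSpace 𝕜 E]
  [NormedAddCommGroup F] [NormedSpace 𝕜 F]

lemma fderiv_fderiv_smul_apply {f : E → 𝕜} {g : E → F} {x : E}
    (hf : ContDiffAt 𝕜 2 f x) (hg : ContDiffAt 𝕜 2 g x) (v w : E) :
    fderiv 𝕜 (fderiv 𝕜 (fun y => f y • g y)) x v w =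
      f x • fderiv 𝕜 (fderiv 𝕜 g) x v w + fderiv 𝕜 f x v • fderiv 𝕜 g x w
        + fderiv 𝕜 f x w • fderiv 𝕜 g x v + fderiv 𝕜 (fderiv 𝕜 f) x v w • g x := by
  have hf' : DifferentiableAt 𝕜 (fderiv 𝕜 f) x :=
    (hf.fderiv_right (m := 1) le_rfl).differentiableAt one_ne_zero
  have hg' : DifferentiableAt 𝕜 (fderiv 𝕜 g) x :=
    (hg.fderiv_right (m := 1) le_rfl).differentiableAt one_ne_zero
  have fderiv_near : fderiv 𝕜 (fun y => f y • g y) =ᶠ[𝓝 x]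
      fun y => f y • fderiv 𝕜 g y + (fderiv 𝕜 f y).smulRight (g y) := by
    filter_upwards [hf.eventually (by simp), hg.eventually (by simp)] with y hfy hgy
    exact fderiv_fun_smul (hfy.differentiableAt two_ne_zero) (hgy.differentiableAt two_ne_zero)
  have hfx := (hf.differentiableAt two_ne_zero).hasFDerivAt
  have hgx := (hg.differentiableAt two_ne_zero).hasFDerivAt
  have hsecond := (hfx.smul hg'.hasFDerivAt).add
    ((ContinuousLinearMap.smulRightL 𝕜 E F).hasFDerivAt_of_bilinear hf'.hasFDerivAt hgx)
  rw [fderiv_near.fderiv_eq]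
  refine (congrArg (fun L : E →L[𝕜] E →L[𝕜] F => L v w) hsecond.fderiv).trans ?_
  simp only [ContinuousLinearMap.precompR_apply, ContinuousLinearMap.compL_apply, add_apply,
    smul_apply, ContinuousLinearMap.smulRight_apply, ContinuousLinearMap.comp_apply,
    ContinuousLinearMap.smulRightL_apply_apply, ContinuousLinearMap.precompL_apply]
  abel

lemma fderiv_fderiv_comp_apply {g : 𝕜 → F} {f : E → 𝕜} {x : E}
    (hg : ContDiffAt 𝕜 2 g (f x)) (hf : ContDiffAt 𝕜 2 f x) (v w : E) :
    fderiv 𝕜 (fderiv 𝕜 (fun y => g (f y))) x v w =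
      (fderiv 𝕜 f x v * fderiv 𝕜 f x w) • deriv (deriv g) (f x)
        + fderiv 𝕜 (fderiv 𝕜 f) x v w • deriv g (f x) := by
  have hf' : DifferentiableAt 𝕜 (fderiv 𝕜 f) x :=
    (hf.fderiv_right (m := 1) le_rfl).differentiableAt one_ne_zero
  have hg' : DifferentiableAt 𝕜 (deriv g) (f x) :=
    (hg.derivWithin (m := 1) le_rfl).differentiableAt one_ne_zero
  have fderiv_near : fderiv 𝕜 (fun y => g (f y)) =ᶠ[𝓝 x]
      fun y => (fderiv 𝕜 f y).smulRight (deriv g (f y)) := by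
    filter_upwards [hf.eventually (by simp),
      hf.continuousAt.eventually (hg.eventually (by simp))] with y hfy hgy
    exact ((hgy.differentiableAt two_ne_zero).hasDerivAt.hasFDerivAt.comp y
      (hfy.differentiableAt two_ne_zero).hasFDerivAt).fderiv.trans (by ext; simp)
  have hfx := (hf.differentiableAt two_ne_zero).hasFDerivAt
  have hsecond := (ContinuousLinearMap.smulRightL 𝕜 E F).hasFDerivAt_of_bilinear
    hf'.hasFDerivAt (hg'.hasDerivAt.hasFDerivAt.comp x hfx)
  rw [fderiv_near.fderiv_eq]
  refine (congrArg (fun L : E →L[𝕜] E →L[𝕜] F => L v w) hsecond.fderiv).trans ?_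
  simp [smul_smul]

lemma fderiv_apply_self_eq_zero {f : E → F} {x : E} (hf : DifferentiableAt 𝕜 f x)
    (hray : ∀ᶠ t : 𝕜 in 𝓝 1, f (t • x) = f x) : fderiv 𝕜 f x x = 0 := by
  have hline : HasDerivAt (fun t : 𝕜 => t • x) x 1 := by
    simpa using (hasDerivAt_id (1 : 𝕜)).smul_const x
  have hcomp : HasDerivAt (fun t : 𝕜 => f (t • x)) (fderiv 𝕜 f x x) 1 :=
    HasFDerivAt.comp_hasDerivAt 1 (by simpa using hf.hasFDerivAt) hline
  exact hcomp.unique ((hasDerivAt_const 1 (f x)).congr_of_eventuallyEq hray)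

end Calculus

section LaplaceOperator

variable {E F : Type*} [NormedAddCommGroup E] [InnerProductSpace ℝ E] [FiniteDimensional ℝ E]
  [NormedAddCommGroup F] [NormedSpace ℝ F] {x : E}

lemma laplacian_apply_eq_sum_fderiv_fderiv (f : E → F) (x : E) :
    Δ f x = ∑ i, fderiv ℝ (fderiv ℝ f) x (stdOrthonormalBasis ℝ E i)
      (stdOrthonormalBasis ℝ E i) := by
  simp [laplacian_eq_iteratedFDeriv_stdOrthonormalBasis, iteratedFDeriv_two_apply]

lemma sum_fderiv_smul_fderiv (f : E → ℝ) (g : E → F) (x : E) :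
    ∑ i, fderiv ℝ f x (stdOrthonormalBasis ℝ E i) • fderiv ℝ g x (stdOrthonormalBasis ℝ E i) =
      fderiv ℝ g x (∇ f x) := by
  rw [← (stdOrthonormalBasis ℝ E).sum_repr' (∇ f x), map_sum]
  simp [inner_gradient_right]

lemma laplacian_smul_apply {f : E → ℝ} {g : E → F}
    (hf : ContDiffAt ℝ 2 f x) (hg : ContDiffAt ℝ 2 g x) :
    Δ (fun y => f y • g y) x =
      f x • Δ g x + (2 : ℝ) • fderiv ℝ g x (∇ f x) + Δ f x • g x := by
  simp only [laplacian_apply_eq_sum_fderiv_fderiv, fderiv_fderiv_smul_apply hf hg,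
    Finset.sum_add_distrib, sum_fderiv_smul_fderiv, ← Finset.smul_sum, ← Finset.sum_smul]
  module

lemma laplacian_comp_apply {g : ℝ → F} {f : E → ℝ}
    (hg : ContDiffAt ℝ 2 g (f x)) (hf : ContDiffAt ℝ 2 f x) :
    Δ (fun y => g (f y)) x =
      ‖∇ f x‖ ^ 2 • deriv (deriv g) (f x) + Δ f x • deriv g (f x) := by
  have sum_sq : ∑ i, fderiv ℝ f x (stdOrthonormalBasis ℝ E i) *
      fderiv ℝ f x (stdOrthonormalBasis ℝ E i) = ‖∇ f x‖ ^ 2 := by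
    rw [← real_inner_self_eq_norm_sq, inner_gradient_left]
    exact sum_fderiv_smul_fderiv f f x
  simp only [laplacian_apply_eq_sum_fderiv_fderiv, fderiv_fderiv_comp_apply hg hf,
    Finset.sum_add_distrib, ← Finset.sum_smul, sum_sq]

lemma laplacian_norm_sq (x : E) : Δ (fun y : E => ‖y‖ ^ 2) x = 2 * Module.finrank ℝ E := by
  have hess_apply (v : E) :
      fderiv ℝ (fderiv ℝ fun y : E => ‖y‖ ^ 2) x v v = 2 * inner ℝ v v := by
    rw [fderiv_norm_sq]
    exact (congrArg (fun L : E →L[ℝ] E →L[ℝ] ℝ => L v v)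
      (2 • innerSL ℝ : E →L[ℝ] E →L[ℝ] ℝ).fderiv).trans (nsmul_eq_mul 2 _)
  simp [laplacian_apply_eq_sum_fderiv_fderiv, hess_apply, mul_comm]

end LaplaceOperator

section Radial

variable {E F : Type*} [NormedAddCommGroup E] [InnerProductSpace ℝ E]
  [NormedAddCommGroup F] [NormedSpace ℝ F] {x : E}

section Gradient

variable [CompleteSpace E]

lemma hasGradientAt_norm (hx : x ≠ 0) : HasGradientAt (fun y : E => ‖y‖) (‖x‖⁻¹ • x) x := by
  have hsqrt := (hasStrictFDerivAt_norm_sq x).hasFDerivAt.sqrt (by simpa using hx)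
  simp only [sqrt_sq (norm_nonneg _)] at hsqrt
  rw [hasGradientAt_iff_hasFDerivAt]
  refine hsqrt.congr_fderiv ?_
  ext v
  simp only [one_div, mul_inv_rev, smul_apply, coe_innerSL_apply, nsmul_eq_mul, Nat.cast_ofNat,
    smul_eq_mul, map_smul, toDual_apply_apply]
  ring

lemma hasGradientAt_comp_norm {g : ℝ → ℝ} {g' : ℝ} (hg : HasDerivAt g g' ‖x‖) (hx : x ≠ 0) :
    HasGradientAt (fun y : E => g ‖y‖) ((g' / ‖x‖) • x) x := by
  refine (hg.comp_hasFDerivAt x (hasGradientAt_norm hx).hasFDerivAt).congr_fderiv ?_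
  simp [smul_smul, div_eq_mul_inv]

end Gradient

variable [FiniteDimensional ℝ E]

-- `Δ ‖·‖` is read off from `Δ ‖·‖² = 2n` and the product rule for `‖·‖ * ‖·‖`.
lemma laplacian_norm (hx : x ≠ 0) :
    Δ (fun y : E => ‖y‖) x = (Module.finrank ℝ E - 1) / ‖x‖ := by
  have hr : ‖x‖ ≠ 0 := norm_ne_zero_iff.mpr hx
  have hnorm : ContDiffAt ℝ 2 (fun y : E => ‖y‖) x := contDiffAt_norm ℝ hx
  have grad_apply : fderiv ℝ (fun y : E => ‖y‖) x (∇ (fun y : E => ‖y‖) x) = 1 := by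
    rw [← inner_gradient_left, (hasGradientAt_norm hx).gradient, real_inner_self_eq_norm_sq]
    simp [norm_smul, hr]
  have hsq : 2 * (Module.finrank ℝ E : ℝ) =
      ‖x‖ * Δ (fun y : E => ‖y‖) x + 2 + Δ (fun y : E => ‖y‖) x * ‖x‖ := by
    simpa [← sq, laplacian_norm_sq, grad_apply] using laplacian_smul_apply hnorm hnorm
  rw [eq_div_iff hr]
  linarith

lemma laplacian_comp_norm {g : ℝ → F} (hg : ContDiffAt ℝ 2 g ‖x‖) (hx : x ≠ 0) :
    Δ (fun y : E => g ‖y‖) x =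
      deriv (deriv g) ‖x‖ + ((Module.finrank ℝ E - 1) / ‖x‖) • deriv g ‖x‖ := by
  rw [laplacian_comp_apply hg (contDiffAt_norm ℝ hx), laplacian_norm hx,
    (hasGradientAt_norm hx).gradient]
  simp [norm_smul, hx]

lemma laplacian_comp_norm_smul {g : ℝ → ℝ} {f : E → F} (hg : ContDiffAt ℝ 2 g ‖x‖)
    (hf : ContDiffAt ℝ 2 f x) (hx : x ≠ 0) (hray : ∀ᶠ t : ℝ in 𝓝 1, f (t • x) = f x) :
    Δ (fun y => g ‖y‖ • f y) x = g ‖x‖ • Δ f x + Δ (fun y : E => g ‖y‖) x • f x := by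
  have hgrad := hasGradientAt_comp_norm (hg.differentiableAt two_ne_zero).hasDerivAt hx
  have hradial : ContDiffAt ℝ 2 (fun y : E => g ‖y‖) x := hg.comp x (contDiffAt_norm ℝ hx)
  have cross_eq_zero : fderiv ℝ f x (∇ (fun y : E => g ‖y‖) x) = 0 := by
    rw [hgrad.gradient, map_smul,
      fderiv_apply_self_eq_zero (hf.differentiableAt two_ne_zero) hray, smul_zero]
  rw [laplacian_smul_apply hradial hf, cross_eq_zero, smul_zero, add_zero]

end Radial

section PowLog

/-- The radial profile `r ↦ r ^ γ * (log (σ * r)) ^ τ`. For fixed `σ`, differentiation acts on the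
span of these profiles by shifting the exponents, so the general `γ` and `τ` are kept. Real powers
are used, so the intended domain is `r > 0`, `σ * r > 1`. -/
def powLog (σ γ τ r : ℝ) : ℝ := r ^ γ * log (σ * r) ^ τ

variable {σ r : ℝ}

lemma powLog_div (γ τ : ℝ) (hr : r ≠ 0) : powLog σ γ τ r / r = powLog σ (γ - 1) τ r := by
  rw [powLog, powLog, rpow_sub_one hr]
  ring

lemma contDiffAt_powLog (γ τ : ℝ) {n : WithTop ℕ∞} (hlog : log (σ * r) ≠ 0) :
    ContDiffAt ℝ n (powLog σ γ τ) r := by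
  have hσr : σ * r ≠ 0 := (log_ne_zero.mp hlog).1
  have hmul : ContDiffAt ℝ n (fun s => σ * s) r := by fun_prop
  exact (contDiffAt_id.rpow_const_of_ne (right_ne_zero_of_mul hσr)).mul
    ((hmul.log hσr).rpow_const_of_ne hlog)

lemma deriv_powLog (γ τ : ℝ) (hlog : log (σ * r) ≠ 0) :
    deriv (powLog σ γ τ) r = γ * powLog σ (γ - 1) τ r + τ * powLog σ (γ - 1) (τ - 1) r := by
  have hσr : σ * r ≠ 0 := (log_ne_zero.mp hlog).1
  have hσ : σ ≠ 0 := left_ne_zero_of_mul hσr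
  have hr : r ≠ 0 := right_ne_zero_of_mul hσr
  have hpow : HasDerivAt (fun s : ℝ => s ^ γ) (γ * r ^ (γ - 1)) r :=
    hasDerivAt_rpow_const (.inl hr)
  have hlogpow := (((hasDerivAt_id r).const_mul σ).log hσr).rpow_const (p := τ) (.inl hlog)
  refine (hpow.mul hlogpow).deriv.trans ?_
  simp only [powLog, rpow_sub_one hr, id_eq]
  field_simp

lemma deriv_deriv_powLog (γ τ : ℝ) (hlog : log (σ * r) ≠ 0) :
    deriv (deriv (powLog σ γ τ)) r =
      γ * (γ - 1) * powLog σ (γ - 2) τ r + τ * (2 * γ - 1) * powLog σ (γ - 2) (τ - 1) r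
        + τ * (τ - 1) * powLog σ (γ - 2) (τ - 2) r := by
  have log_near : ∀ᶠ s in 𝓝 r, log (σ * s) ≠ 0 :=
    ContinuousAt.eventually_ne (.log (by fun_prop) (log_ne_zero.mp hlog).1) hlog
  have deriv_near : deriv (powLog σ γ τ) =ᶠ[𝓝 r]
      fun s => γ * powLog σ (γ - 1) τ s + τ * powLog σ (γ - 1) (τ - 1) s :=
    log_near.mono fun s hs => deriv_powLog γ τ hs
  have hdiff (τ' : ℝ) : DifferentiableAt ℝ (powLog σ (γ - 1) τ') r :=
    (contDiffAt_powLog _ _ hlog).differentiableAt one_ne_zero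
  rw [deriv_near.deriv_eq, deriv_fun_add ((hdiff _).const_mul γ) ((hdiff _).const_mul τ),
    deriv_const_mul _ (hdiff _), deriv_const_mul _ (hdiff _), deriv_powLog _ _ hlog,
    deriv_powLog _ _ hlog, show γ - 1 - 1 = γ - 2 by ring, show τ - 1 - 1 = τ - 2 by ring]
  ring

lemma laplacian_powLog_norm {E : Type*} [NormedAddCommGroup E] [InnerProductSpace ℝ E]
    [FiniteDimensional ℝ E] {x : E} (γ τ : ℝ) (hlog : log (σ * ‖x‖) ≠ 0) :
    Δ (fun y : E => powLog σ γ τ ‖y‖) x =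
      γ * (γ + Module.finrank ℝ E - 2) * powLog σ (γ - 2) τ ‖x‖
        + τ * (2 * γ + Module.finrank ℝ E - 2) * powLog σ (γ - 2) (τ - 1) ‖x‖
        + τ * (τ - 1) * powLog σ (γ - 2) (τ - 2) ‖x‖ := by
  have hr : ‖x‖ ≠ 0 := right_ne_zero_of_mul (log_ne_zero.mp hlog).1
  have deriv_div : deriv (powLog σ γ τ) ‖x‖ / ‖x‖ =
      γ * powLog σ (γ - 2) τ ‖x‖ + τ * powLog σ (γ - 2) (τ - 1) ‖x‖ := by
    rw [deriv_powLog γ τ hlog, add_div, mul_div_assoc, mul_div_assoc, powLog_div _ _ hr,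
      powLog_div _ _ hr, show γ - 1 - 1 = γ - 2 by ring]
  rw [laplacian_comp_norm (contDiffAt_powLog γ τ hlog) (norm_ne_zero_iff.mp hr),
    deriv_deriv_powLog γ τ hlog, smul_eq_mul, div_mul_eq_mul_div, mul_div_assoc, deriv_div]
  ring

end PowLog

section Cone

lemma lap_eq_laplacian {N : ℕ} (u : Euc N → ℝ) : lap N u = Δ u := by
  rw [laplacian_eq_iteratedFDeriv_orthonormalBasis u (EuclideanSpace.basisFun (Fin N) ℝ)]
  ext x
  simp [lap]

lemma isOpen_cone {N : ℕ} {Ω : Set (Euc N)}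
    (hΩ : IsOpen {ω : Metric.sphere (0 : Euc N) 1 | (ω : Euc N) ∈ Ω}) : IsOpen (cone N Ω) := by
  obtain ⟨U, hU, hUΩ⟩ := isOpen_induced_iff.mp hΩ
  have cone_eq : cone N Ω = {0}ᶜ ∩ (fun x => ‖x‖⁻¹ • x) ⁻¹' U := by
    ext x
    refine and_congr_right fun hx => ?_
    have hmem : ‖x‖⁻¹ • x ∈ Metric.sphere (0 : Euc N) 1 := by simp [norm_smul, hx]
    exact (Set.ext_iff.mp hUΩ ⟨_, hmem⟩).symm
  have hcont : ContinuousOn (fun x : Euc N => ‖x‖⁻¹ • x) {0}ᶜ :=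
    (continuousOn_id.norm.inv₀ fun _ => norm_ne_zero_iff.mpr).smul continuousOn_id
  rw [cone_eq]
  exact hcont.isOpen_inter_preimage isOpen_compl_singleton hU

end Cone

theorem laplacian_of_log_profile_general {E : Type*} [NormedAddCommGroup E]
    [InnerProductSpace ℝ E] [FiniteDimensional ℝ E] {Φ : E → ℝ} {lam1 σ : ℝ} {x : E}
    (hΦ : ContDiffAt ℝ 2 Φ x) (hray : ∀ᶠ t : ℝ in 𝓝 1, Φ (t • x) = Φ x)
    (heig : Δ Φ x = -lam1 * ‖x‖ ^ (-(2 : ℝ)) * Φ x) (hσx : 1 < σ * ‖x‖) (τ : ℝ) :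
    -Δ (fun y => Φ y * ‖y‖ ^ ((2 - (Module.finrank ℝ E : ℝ)) / 2) * log (σ * ‖y‖) ^ τ) x -
        (lam1 + (((Module.finrank ℝ E : ℝ) - 2) / 2) ^ 2) * ‖x‖ ^ (-(2 : ℝ)) *
          (Φ x * ‖x‖ ^ ((2 - (Module.finrank ℝ E : ℝ)) / 2) * log (σ * ‖x‖) ^ τ) =
      τ * (1 - τ) * Φ x * ‖x‖ ^ ((2 - (Module.finrank ℝ E : ℝ)) / 2 - 2) *
        log (σ * ‖x‖) ^ (τ - 2) := by
  have hlog : log (σ * ‖x‖) ≠ 0 := (log_pos hσx).ne'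
  have hx : x ≠ 0 := norm_ne_zero_iff.mp (right_ne_zero_of_mul (log_ne_zero.mp hlog).1)
  set γ : ℝ := (2 - (Module.finrank ℝ E : ℝ)) / 2 with hγ
  have hn : (Module.finrank ℝ E : ℝ) = 2 - 2 * γ := by rw [hγ]; ring
  have profile_eq : (fun y => Φ y * ‖y‖ ^ γ * log (σ * ‖y‖) ^ τ) =
      fun y => powLog σ γ τ ‖y‖ • Φ y := by
    ext y
    rw [powLog, smul_eq_mul]
    ring
  have pow_eq : ‖x‖ ^ (γ - 2) = ‖x‖ ^ γ * ‖x‖ ^ (-(2 : ℝ)) := by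
    rw [sub_eq_add_neg, rpow_add (norm_pos_iff.mpr hx)]
  rw [profile_eq, laplacian_comp_norm_smul (contDiffAt_powLog γ τ hlog) hΦ hx hray,
    laplacian_powLog_norm γ τ hlog, heig, hn]
  simp only [powLog, pow_eq, smul_eq_mul]
  ring

/-- action of `-Δ - μ|x|⁻²`, with `μ = λ₁ + ((N-2)/2)²`, on the logarithmic
profile `Φ(x)|x|^{(2-N)/2} log^τ(σ|x|)`. -/
theorem laplacian_of_log_profile
    (N : ℕ) (hN : 2 ≤ N) (Ω : Set (Euc N)) (hΩ : IsConeDomain N Ω)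
    (lam1 : ℝ) (φ : Euc N → ℝ)
    (hsm : ContDiffOn ℝ 2 (fun x => φ (‖x‖⁻¹ • x)) (cone N Ω))
    (heig : ∀ x ∈ cone N Ω,
      lap N (fun y => φ (‖y‖⁻¹ • y)) x = -lam1 * ‖x‖ ^ (-(2:ℝ)) * φ (‖x‖⁻¹ • x)) :
    ∀ σ : ℝ, 0 < σ → ∀ τ : ℝ, ∀ x ∈ cone N Ω, 1 < σ * ‖x‖ →
      -lap N (fun y =>
          φ (‖y‖⁻¹ • y) * ‖y‖ ^ ((2 - (N : ℝ)) / 2) * (Real.log (σ * ‖y‖)) ^ τ) x -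
        (lam1 + (((N : ℝ) - 2) / 2) ^ 2) * ‖x‖ ^ (-(2:ℝ)) *
          (φ (‖x‖⁻¹ • x) * ‖x‖ ^ ((2 - (N : ℝ)) / 2) * (Real.log (σ * ‖x‖)) ^ τ) =
      τ * (1 - τ) * φ (‖x‖⁻¹ • x) * ‖x‖ ^ ((2 - (N : ℝ)) / 2 - 2) *
        (Real.log (σ * ‖x‖)) ^ (τ - 2) := by
  intro σ _ τ x hx hσx
  have hsmooth := hsm.contDiffAt ((isOpen_cone hΩ.2.2).mem_nhds hx)
  have hray : ∀ᶠ t : ℝ in 𝓝 1, φ (‖t • x‖⁻¹ • t • x) = φ (‖x‖⁻¹ • x) :=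
    (eventually_gt_nhds one_pos).mono fun t ht =>
      congrArg φ (NormedSpace.normalize_smul_of_pos ht x)
  have heigen := heig x hx
  rw [lap_eq_laplacian] at heigen ⊢
  simpa only [finrank_euclideanSpace_fin] using
    laplacian_of_log_profile_general hsmooth hray heigen hσx τ
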